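/- (Deformations of the space of symbols S³₄ = F₁ ⊕ F₂ ⊕ F₃ ⊕ F₄.) On quadruples (f₁,f₂,f₃,f₄) of polynomials, let L_X(f₁,f₂,f₃,f₄) = (L_X¹f₁, L_X²f₂, L_X³f₃, L_X⁴f₄), and define the operators C_{i,i}(X) multiplying the i-th component by X′ (i = 1,2,3,4), C_{1,3}(X) sending (f₁,f₂,f₃,f₄) to (0,0,X‴f₁ + 2X″f₁′,0), C_{2,4}(X) sending it to (0,0,0,X‴f₂ + 2X″f₂′), and C_{1,4}(X) sending it to (0,0,0,X‴f₁′ + X″f₁″). Suppose the real parameters satisfy t_{1,3}(t_{1,1} − t_{3,3}) = 0, t_{2,4}(t_{2,2} − t_{4,4}) = 0, and t_{1,4}(t_{1,1} − t_{4,4}) = 0. Then ℒ_X = L_X + t_{1,1}C_{1,1}(X) + t_{2,2}C_{2,2}(X) + t_{3,3}C_{3,3}(X) + t_{4,4}C_{4,4}(X) + t_{1,3}C_{1,3}(X) + t_{2,4}C_{2,4}(X) + t_{1,4}C_{1,4}(X) defines a Vect(1)-action: ℒ_{[X,Y]} = ℒ_X ∘ ℒ_Y − ℒ_Y ∘ ℒ_X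 for all X, Y ∈ ℝ[x]. -/

import Mathlib

noncomputable section

/-- Polynomials over ℝ, identified with polynomial vector fields / densities on the line. -/
abbrev P : Type := Polynomial ℝ

/-- Derivative d/dx. -/
def D : P → P := fun f => Polynomial.derivative f

/-- Iterated derivative: `Dk k f = f^(k)`. -/
def Dk (k : ℕ) : P → P := D^[k]

/-- Lie bracket on Vect(1): [X,Y] = XY' - X'Y. -/
def br (X Y : P) : P := X * D Y - D X * Y

/-- Action of the vector field X on λ-densities: `L_X^λ f = X f' + λ X' f`. -/
def Lw (l : ℝ) (X f : P) : P := X * D f + Polynomial.C l * D X * f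

/-- Action on operators from F_ν to F_μ: `L_X^{ν,μ}(A) = L_X^μ ∘ A - A ∘ L_X^ν`. -/
def LD (nu mu : ℝ) (X : P) (A : P → P) (f : P) : P := Lw mu X (A f) - A (Lw nu X f)

/-- 1-cocycle condition with values in D_{ν,μ}. -/
def IsCocycle1 (nu mu : ℝ) (c : P → P → P) : Prop :=
  ∀ X Y f, c (br X Y) f = LD nu mu X (c Y) f - LD nu mu Y (c X) f

/-- 2-cocycle condition with values in D_{ν,μ}. -/
def IsCocycle2 (nu mu : ℝ) (o : P → P → P → P) : Prop :=
  ∀ X Y Z f,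
    LD nu mu X (o Y Z) f - LD nu mu Y (o X Z) f + LD nu mu Z (o X Y) f
      - o (br X Y) Z f + o (br X Z) Y f - o (br Y Z) X f = 0

/-- Cup product of 1-cochains: `[[C₁,C₂]](X,Y) = C₁(X)∘C₂(Y) - C₁(Y)∘C₂(X)`. -/
def cup (c₁ c₂ : P → P → P) (X Y f : P) : P := c₁ X (c₂ Y f) - c₁ Y (c₂ X f)

/-- Coboundary of a 1-cochain b with values in D_{ν,μ}. -/
def cob (nu mu : ℝ) (b : P → P → P) (X Y f : P) : P :=
  LD nu mu X (b Y) f - LD nu mu Y (b X) f - b (br X Y) f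


/-- The space of symbols `S³₄ = F₁ ⊕ F₂ ⊕ F₃ ⊕ F₄`, as quadruples of polynomials. -/
abbrev V4 : Type := P × P × P × P

/-- The Lie derivative on `S³₄`. -/
def L4 (X : P) (v : V4) : V4 :=
  (Lw 1 X v.1, Lw 2 X v.2.1, Lw 3 X v.2.2.1, Lw 4 X v.2.2.2)

def C11' (X : P) (v : V4) : V4 := (D X * v.1, 0, 0, 0)
def C22' (X : P) (v : V4) : V4 := (0, D X * v.2.1, 0, 0)
def C33' (X : P) (v : V4) : V4 := (0, 0, D X * v.2.2.1, 0)
def C44' (X : P) (v : V4) : V4 := (0, 0, 0, D X * v.2.2.2)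
def C13' (X : P) (v : V4) : V4 := (0, 0, Dk 3 X * v.1 + 2 * Dk 2 X * D v.1, 0)
def C24' (X : P) (v : V4) : V4 := (0, 0, 0, Dk 3 X * v.2.1 + 2 * Dk 2 X * D v.2.1)
def C14' (X : P) (v : V4) : V4 := (0, 0, 0, Dk 3 X * D v.1 + Dk 2 X * Dk 2 v.1)

/-- The deformed action on `S³₄`. -/
def LL (t11 t22 t33 t44 t13 t24 t14 : ℝ) (X : P) (v : V4) : V4 :=
  L4 X v + t11 • C11' X v + t22 • C22' X v + t33 • C33' X v + t44 • C44' X v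
    + t13 • C13' X v + t24 • C24' X v + t14 • C14' X v

/-- under the integrability conditions, the deformed action on `S³₄`
defines a Vect(1)-action. -/
theorem deformation_of_S34 (t11 t22 t33 t44 t13 t24 t14 : ℝ)
    (h1 : t13 * (t11 - t33) = 0)
    (h2 : t24 * (t22 - t44) = 0)
    (h3 : t14 * (t11 - t44) = 0) :
    ∀ X Y : P, ∀ v : V4,
      LL t11 t22 t33 t44 t13 t24 t14 (br X Y) v
        = LL t11 t22 t33 t44 t13 t24 t14 X (LL t11 t22 t33 t44 t13 t24 t14 Y v)
          - LL t11 t22 t33 t44 t13 t24 t14 Y (LL t11 t22 t33 t44 t13 t24 t14 X v) := by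
  intro X Y v
  obtain ⟨a, b, c, d⟩ := v
  have h1' := congrArg (Polynomial.C : ℝ → P) h1
  have h2' := congrArg (Polynomial.C : ℝ → P) h2
  have h3' := congrArg (Polynomial.C : ℝ → P) h3
  simp only [map_mul, map_sub, map_zero] at h1' h2' h3'
  have e1 : (Polynomial.C (1 : ℝ) : P) = 1 := map_one _
  have e2 : (Polynomial.C (2 : ℝ) : P) = 2 := map_ofNat _ 2
  have e3 : (Polynomial.C (3 : ℝ) : P) = 3 := map_ofNat _ 3
  have e4 : (Polynomial.C (4 : ℝ) : P) = 4 := map_ofNat _ 4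
  have d0 : D 0 = 0 := Polynomial.derivative_zero
  have dadd : ∀ f g : P, D (f + g) = D f + D g := fun f g => Polynomial.derivative_add
  have dsub : ∀ f g : P, D (f - g) = D f - D g := fun f g => Polynomial.derivative_sub
  have dmul : ∀ f g : P, D (f * g) = D f * g + f * D g := fun f g => Polynomial.derivative_mul
  have dC : ∀ r : ℝ, D (Polynomial.C r) = 0 := fun r => Polynomial.derivative_C
  have d2 : D 2 = 0 := by rw [← e2, dC]
  have d3 : D 3 = 0 := by rw [← e3, dC]
  have d4 : D 4 = 0 := by rw [← e4, dC]
  have k2 : ∀ f : P, Dk 2 f = D (D f) := fun f => rfl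
  have k3 : ∀ f : P, Dk 3 f = D (D (D f)) := fun f => rfl
  refine Prod.ext ?_ (Prod.ext ?_ (Prod.ext ?_ ?_)) <;>
    simp only [LL, L4, C11', C22', C33', C44', C13', C24', C14', Lw, br, k2, k3,
      Prod.fst_add, Prod.snd_add, Prod.fst_sub, Prod.snd_sub, Prod.smul_fst, Prod.smul_snd,
      Polynomial.smul_eq_C_mul, e1, e2, e3, e4, mul_zero, add_zero, zero_add, one_mul,
      dadd, dsub, dmul, dC, d0, d2, d3, d4, zero_mul]
  · ring
  · ring
  · linear_combination (D X * (D (D (D Y)) * a + 2 * D (D Y) * D a)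
      - D Y * (D (D (D X)) * a + 2 * D (D X) * D a)) * h1'
  · linear_combination (D X * (D (D (D Y)) * b + 2 * D (D Y) * D b)
      - D Y * (D (D (D X)) * b + 2 * D (D X) * D b)) * h2' +
      (D X * (D (D (D Y)) * D a + D (D Y) * D (D a))
      - D Y * (D (D (D X)) * D a + D (D X) * D (D a))) * h3'
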